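/- Let η₁, η₂, ε > 0 and μ(t) = (2/π) e^t (π/2 + arctan t), and consider the planar system x' = −η₁ (μ'(t)/μ(t)) x + ε sin(x + t), y' = η₂ (μ'(t)/μ(t)) y + ε cos(x + t). Its nonlinearity f(t,(x,y)) = (ε sin(x+t), ε cos(x+t)) satisfies ‖f(t,z)‖ ≤ 2ε μ'(t)/μ(t) and ‖f(t,z₁) − f(t,z₂)‖ ≤ 2ε (μ'(t)/μ(t)) ‖z₁ − z₂‖ for all t, z, z₁, z₂. Consequently, if 0 < ε < η₃/8 with η₃ = max{η₁, η₂}, this system is topologically conjugate to its linear part x' = −η₁ (μ'(t)/μ(t)) x, y' = η₂ (μ'(t)/μ(t)) y: there exists H : ℝ × ℝ² → ℝ² such that for each t, H(t,·) is a homeomorphism of ℝ², ‖H(t,z) − z‖ and ‖H⁻¹(t,z) − z‖ are uniformly bounded, H carries solutions of the nonlinear system to solutions of the linear part, and H⁻¹ carries solutions of the linear part to solutions of the nonlinear system. -/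

import Mathlib

open MeasureTheory Filter Set

lemma mono_Iic {f f' : ℝ → ℝ} {T : ℝ} (h : ∀ t ≤ T, HasDerivAt f (f' t) t)
    (h0 : ∀ t ≤ T, 0 ≤ f' t) : MonotoneOn f (Iic T) := by
  apply monotoneOn_of_deriv_nonneg (convex_Iic T)
  · exact fun t ht => (h t ht).continuousAt.continuousWithinAt
  · intro t ht
    rw [interior_Iic] at ht
    exact (h t (le_of_lt ht)).differentiableAt.differentiableWithinAt
  · intro t ht
    rw [interior_Iic] at ht
    rw [(h t (le_of_lt ht)).deriv]
    exact h0 t (le_of_lt ht)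

lemma anti_Iic {f f' : ℝ → ℝ} {T : ℝ} (h : ∀ t ≤ T, HasDerivAt f (f' t) t)
    (h0 : ∀ t ≤ T, f' t ≤ 0) : AntitoneOn f (Iic T) := by
  have := mono_Iic (f := fun t => - f t) (f' := fun t => - f' t) (T := T)
    (fun t ht => (h t ht).neg) (fun t ht => by linarith [h0 t ht])
  intro a ha b hb hab
  have := this ha hb hab
  simp only at this
  linarith

lemma global_sol (F : ℝ → ℝ → ℝ) (K : NNReal) (B : ℝ → ℝ) (hF : ∀ x, Continuous (fun t => F t x))
    (hK : ∀ t, LipschitzWith K (F t)) (hB : Continuous B) (hFB : ∀ t x, |F t x| ≤ B t)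
    (t₀ x₀ : ℝ) : ∃ z : ℝ → ℝ, z t₀ = x₀ ∧ ∀ t, HasDerivAt z (F t (z t)) t := by
  have key : ∀ n : ℕ, ∃ z : ℝ → ℝ, z t₀ = x₀ ∧
      ∀ t ∈ Ioo (t₀ - (n + 1)) (t₀ + (n + 1)), HasDerivAt z (F t (z t)) t := by
    intro n
    obtain ⟨L, hL⟩ := (isCompact_Icc (a := t₀ - (n + 1 : ℝ)) (b := t₀ + (n + 1))).bddAbove_image
      hB.continuousOn
    have hL' : ∀ t ∈ Icc (t₀ - (n + 1 : ℝ)) (t₀ + (n + 1)), B t ≤ L := fun t ht =>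
      hL (mem_image_of_mem _ ht)
    have hn : (0 : ℝ) < n + 1 := by positivity
    have hm : t₀ ∈ Icc (t₀ - (n + 1 : ℝ)) (t₀ + (n + 1)) := ⟨by linarith, by linarith⟩
    have hL0 : 0 ≤ L := le_trans (le_trans (abs_nonneg _) (hFB t₀ 0)) (hL' _ hm)
    have hPL : IsPicardLindelof F (tmin := t₀ - (n + 1 : ℝ)) (tmax := t₀ + (n + 1)) ⟨t₀, hm⟩ x₀
        (L.toNNReal * (n + 1)) 0 L.toNNReal K := by
      refine ⟨fun t _ => (hK t).lipschitzOnWith, fun x _ => (hF x).continuousOn, ?_, ?_⟩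
      · intro t ht x _
        rw [Real.coe_toNNReal _ hL0]
        exact (hFB t x).trans (hL' t ht)
      · simp
    obtain ⟨z, hz, hz'⟩ := hPL.exists_eq_forall_mem_Icc_hasDerivWithinAt₀
    exact ⟨z, hz, fun t ht => (hz' t (Ioo_subset_Icc_self ht)).hasDerivAt (Icc_mem_nhds ht.1 ht.2)⟩
  choose Z hZ0 hZ using key
  have hle : ∀ m n : ℕ, m ≤ n → EqOn (Z m) (Z n) (Ioo (t₀ - (m + 1)) (t₀ + (m + 1))) := by
    intro m n hmn
    have hmn' : (m : ℝ) ≤ n := by exact_mod_cast hmn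
    have hm : (0 : ℝ) ≤ m := by positivity
    apply ODE_solution_unique_of_mem_Ioo (v := F) (s := fun _ => univ) (K := K) (t₀ := t₀)
      (fun t _ => (hK t).lipschitzOnWith) ⟨by linarith, by linarith⟩
      (fun t ht => ⟨hZ m t ht, trivial⟩)
      (fun t ht => ⟨hZ n t ⟨by linarith [ht.1], by linarith [ht.2]⟩, trivial⟩)
    rw [hZ0, hZ0]
  refine ⟨fun t => Z ⌈|t - t₀|⌉₊ t, hZ0 _, fun t => ?_⟩
  obtain ⟨N, hN⟩ := exists_nat_gt |t - t₀|
  have hI : t ∈ Ioo (t₀ - N) (t₀ + N) := by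
    rw [abs_lt] at hN; exact ⟨by linarith, by linarith⟩
  have hmem : ∀ s ∈ Ioo (t₀ - N) (t₀ + N), Z ⌈|s - t₀|⌉₊ s = Z N s := by
    intro s hs
    have h1 : |s - t₀| < N := by rw [abs_lt]; exact ⟨by linarith [hs.1], by linarith [hs.2]⟩
    apply hle _ _ (Nat.ceil_le.2 h1.le)
    have h2 := Nat.le_ceil |s - t₀|
    have h3 := abs_le.1 h2
    exact ⟨by linarith [h3.1], by linarith [h3.2]⟩
  have hd := hZ N t ⟨by linarith [hI.1], by linarith [hI.2]⟩
  rw [← hmem t hI] at hd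
  apply hd.congr_of_eventuallyEq
  filter_upwards [Ioo_mem_nhds hI.1 hI.2] with s hs using hmem s hs

lemma gron {d d' : ℝ → ℝ} {K : ℝ} (hd : ∀ t, HasDerivAt d (d' t) t)
    (hK : ∀ t, |d' t| ≤ K * |d t|) (s t : ℝ) :
    |d s| ≤ |d t| * Real.exp (K * |s - t|) := by
  have hsq : ∀ t, |d t * d' t| ≤ K * d t ^ 2 := by
    intro t
    rw [abs_mul, ← sq_abs]
    nlinarith [hK t, abs_nonneg (d t)]
  have h1 : Monotone (fun t => d t ^ 2 * Real.exp (2 * K * t)) := by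
    apply monotone_of_hasDerivAt_nonneg
      (f' := fun t => (2 * (d t * d' t) + 2 * K * d t ^ 2) * Real.exp (2 * K * t))
    · intro t
      have := ((hd t).pow 2).mul (((hasDerivAt_id t).const_mul (2 * K)).exp)
      refine this.congr_deriv ?_
      simp; ring
    · intro t
      have := (abs_le.1 (hsq t)).1
      exact mul_nonneg (by linarith) (Real.exp_pos _).le
  have h2 : Monotone (fun t => -(d t ^ 2 * Real.exp (-2 * K * t))) := by
    apply monotone_of_hasDerivAt_nonneg
      (f' := fun t => (-2 * (d t * d' t) + 2 * K * d t ^ 2) * Real.exp (-2 * K * t))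
    · intro t
      have := (((hd t).pow 2).mul (((hasDerivAt_id t).const_mul (-2 * K)).exp)).neg
      refine this.congr_deriv ?_
      simp; ring
    · intro t
      have := (abs_le.1 (hsq t)).2
      exact mul_nonneg (by linarith) (Real.exp_pos _).le
  have : d s ^ 2 ≤ (|d t| * Real.exp (K * |s - t|)) ^ 2 := by
    rw [mul_pow, sq_abs, ← Real.exp_nat_mul]
    rcases le_total s t with h | h
    · have := h1 h
      simp only at this
      rw [abs_of_nonpos (by linarith)]
      have e : (↑(2 : ℕ) * (K * -(s - t))) = 2 * K * t - 2 * K * s := by push_cast; ring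
      rw [e, Real.exp_sub, ← mul_div_assoc, le_div_iff₀ (Real.exp_pos _)]
      exact this
    · have := h2 h
      simp only at this
      rw [abs_of_nonneg (by linarith)]
      have e : (↑(2 : ℕ) * (K * (s - t))) = -2 * K * t - (-2 * K * s) := by push_cast; ring
      rw [e, Real.exp_sub, ← mul_div_assoc, le_div_iff₀ (Real.exp_pos _)]
      linarith
  exact abs_le_of_sq_le_sq this (by positivity)


lemma no_two_bounded (η ε κ : ℝ) (hη : 0 < η) (hε : 0 < ε) (hκ : 0 < κ) (p : ℝ → ℝ)
    (hp1 : ∀ t, 1 ≤ p t)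
    (hpl : ∀ δ > 0, ∃ T, ∀ s t, s ≤ t → t ≤ T → |p t - p s| ≤ δ * (t - s))
    (hp0 : ∀ δ > 0, ∃ T, ∀ t ≤ T, |p t - 1| ≤ δ)
    (x₁ x₂ : ℝ → ℝ)
    (h₁ : ∀ t, HasDerivAt x₁ (-η * p t * x₁ t + ε * Real.sin (x₁ t + t)) t)
    (h₂ : ∀ t, HasDerivAt x₂ (-η * p t * x₂ t + ε * Real.sin (x₂ t + t)) t)
    (b₁ : ∀ t, |x₁ t| ≤ κ) (b₂ : ∀ t, |x₂ t| ≤ κ) (hlt : ∀ t, x₁ t < x₂ t) : False := by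
  obtain ⟨T₁, hT₁⟩ := hpl (1 / (6 * κ)) (by positivity)
  obtain ⟨T₂, hT₂⟩ := hp0 1 one_pos
  obtain ⟨T, hTT₁, hTT₂⟩ : ∃ T, T ≤ T₁ ∧ T ≤ T₂ := ⟨min T₁ T₂, min_le_left _ _, min_le_right _ _⟩
  have hp2 : ∀ t ≤ T, p t ≤ 2 := fun t ht => by
    have := (abs_le.1 (hT₂ t (ht.trans hTT₂))).2; linarith
  set K := 2 * η + ε with hK
  set L := 1 + 2 * η * κ + ε with hL
  have hKpos : 0 < K := by positivity
  have hLpos : 0 < L := by positivity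
  set k := η / (2 * K * L) with hk
  have hkpos : 0 < k := by positivity
  have hηκ : 0 < η * κ := by positivity
  have hk1 : k < 1 := by
    rw [hk, div_lt_one (by positivity)]
    have : 1 ≤ L := by linarith
    nlinarith
  have step : ∀ σ, 0 ≤ σ → σ ≤ 2 * κ → (∀ t ≤ T, x₂ (t - σ) - σ ≤ x₁ t) →
      ∀ t ≤ T, x₂ (t - (1 - k) * σ) - (1 - k) * σ ≤ x₁ t := by
    intro σ hσ0 hσ hS t ht
    set a := η * σ / (2 * K) with ha
    have haK : K * a = η * σ / 2 := by rw [ha]; field_simp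
    have ha0 : 0 ≤ a := by positivity
    have hgap : ∀ t ≤ T, a ≤ x₁ t - x₂ (t - σ) + σ := by
      have hmono : MonotoneOn (fun t => (x₁ t - x₂ (t - σ) + σ - a) * Real.exp (K * t))
          (Iic T) := by
        apply mono_Iic (f' := fun t => ((-η * p t * x₁ t + ε * Real.sin (x₁ t + t)) -
          (-η * p (t - σ) * x₂ (t - σ) + ε * Real.sin (x₂ (t - σ) + (t - σ))) +
          K * (x₁ t - x₂ (t - σ) + σ - a)) * Real.exp (K * t))
        · intro t _
          have e2 := (h₂ (t - σ)).comp_sub_const t σ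
          have := ((((h₁ t).sub e2).add_const σ).sub_const a).mul
            (((hasDerivAt_id t).const_mul K).exp)
          refine this.congr_deriv ?_
          simp; ring
        · intro t ht
          apply mul_nonneg _ (Real.exp_pos _).le
          set D := x₁ t - x₂ (t - σ) + σ with hD
          set X := x₂ (t - σ) - σ with hX
          have hx1 : x₁ t = D + X := by rw [hD, hX]; ring
          have hx2 : x₂ (t - σ) = X + σ := by rw [hX]; ring
          have hD0 : 0 ≤ D := by have := hS t ht; linarith
          have hXb : |X| ≤ 3 * κ := by
            have := abs_le.1 (b₂ (t - σ))
            rw [abs_le]; constructor <;> linarith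
          have hpd := hT₁ (t - σ) t (by linarith) (by linarith)
          rw [sub_sub_cancel] at hpd
          have hprod : |(p t - p (t - σ)) * X| ≤ σ / 2 := by
            rw [abs_mul]
            calc _ ≤ (1 / (6 * κ) * σ) * (3 * κ) := by gcongr
              _ = σ / 2 := by field_simp; ring
          have hprod' := (abs_le.1 hprod).2
          have hsin : |Real.sin (D + X + t) - Real.sin (X + σ + (t - σ))| ≤ D := by
            have := Real.abs_sin_sub_sin_le (D + X + t) (X + σ + (t - σ))
            refine this.trans ?_
            rw [show D + X + t - (X + σ + (t - σ)) = D by ring, abs_of_nonneg hD0]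
          have hsin' := (abs_le.1 hsin).1
          rw [hx1, hx2, mul_sub, haK]
          have e1 := hp1 (t - σ)
          have e2 := hp2 t ht
          have q1 : η * ((p t - p (t - σ)) * X) ≤ η * (σ / 2) :=
            mul_le_mul_of_nonneg_left hprod' hη.le
          have q2 : ε * (-D) ≤
              ε * (Real.sin (D + X + t) - Real.sin (X + σ + (t - σ))) :=
            mul_le_mul_of_nonneg_left hsin' hε.le
          have q3 : η * D * p t ≤ η * D * 2 := mul_le_mul_of_nonneg_left e2 (by positivity)
          have q4 : η * σ * 1 ≤ η * σ * p (t - σ) := mul_le_mul_of_nonneg_left e1 (by positivity)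
          rw [hK]
          nlinarith
      intro t ht
      have hlow : ∀ s ≤ t, -a * Real.exp (K * s) ≤
          (x₁ t - x₂ (t - σ) + σ - a) * Real.exp (K * t) := by
        intro s hs
        refine le_trans ?_ (hmono (hs.trans ht) ht hs)
        simp only
        have := hS s (hs.trans ht)
        apply mul_le_mul_of_nonneg_right _ (Real.exp_pos _).le
        linarith
      have hlim : Tendsto (fun s => -a * Real.exp (K * s)) atBot (nhds (-a * 0)) := by
        apply Tendsto.const_mul
        exact Real.tendsto_exp_atBot.comp (tendsto_id.const_mul_atBot hKpos)
      have h0 : -a * 0 ≤ (x₁ t - x₂ (t - σ) + σ - a) * Real.exp (K * t) := by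
        apply le_of_tendsto hlim
        filter_upwards [eventually_le_atBot t] with s hs using hlow s hs
      have h3 : 0 ≤ x₁ t - x₂ (t - σ) + σ - a := by
        by_contra hneg
        push Not at hneg
        have := mul_neg_of_neg_of_pos hneg (Real.exp_pos (K * t))
        linarith
      linarith
    have hLip : MonotoneOn (fun r => L * r - (x₂ r + r)) (Iic T) := by
      apply mono_Iic (f' := fun r => L - ((-η * p r * x₂ r + ε * Real.sin (x₂ r + r)) + 1))
      · intro r _
        have := ((hasDerivAt_id r).const_mul L).sub ((h₂ r).add (hasDerivAt_id r))
        refine this.congr_deriv ?_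
        simp
      · intro r hr
        have e1 := hp1 r
        have e2 := hp2 r hr
        have e3 : |p r * x₂ r| ≤ 2 * κ := by
          rw [abs_mul, abs_of_nonneg (by linarith)]
          exact mul_le_mul e2 (b₂ r) (abs_nonneg _) (by norm_num)
        have e4 := (abs_le.1 e3).1
        have e5 := Real.sin_le_one (x₂ r + r)
        rw [hL]
        nlinarith
    have hkσ : 0 ≤ k * σ := by positivity
    have hkσ' : k * σ ≤ σ := by nlinarith
    have hl := hLip (show t - σ ∈ Iic T by simp; linarith)
      (show t - σ + k * σ ∈ Iic T by simp; linarith) (by linarith)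
    simp only at hl
    have hg := hgap t ht
    have hLk : L * (k * σ) = a := by rw [hk, ha]; field_simp
    rw [show t - (1 - k) * σ = t - σ + k * σ by ring]
    nlinarith
  have hiter : ∀ n : ℕ, ∀ t ≤ T,
      x₂ (t - (1 - k) ^ n * (2 * κ)) - (1 - k) ^ n * (2 * κ) ≤ x₁ t := by
    intro n
    induction n with
    | zero =>
      intro t _
      have e1 := (abs_le.1 (b₁ t)).1
      have e2 := (abs_le.1 (b₂ (t - (1 - k) ^ 0 * (2 * κ)))).2
      simp only [pow_zero, one_mul] at *
      linarith
    | succ n ih =>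
      have h0 : 0 ≤ (1 - k) ^ n := pow_nonneg (by linarith) _
      have h1 : (1 - k) ^ n ≤ 1 := pow_le_one₀ (by linarith) (by linarith)
      have := step _ (by positivity) (by nlinarith) ih
      intro t ht
      have := this t ht
      rw [pow_succ']
      rwa [← mul_assoc] at this
  have hlim0 : Tendsto (fun n : ℕ => (1 - k) ^ n * (2 * κ)) atTop (nhds 0) := by
    have := (tendsto_pow_atTop_nhds_zero_of_lt_one (r := 1 - k) (by linarith)
      (by linarith)).mul_const (2 * κ)
    simpa using this
  have hlim : Tendsto (fun n : ℕ => x₂ (T - (1 - k) ^ n * (2 * κ)) - (1 - k) ^ n * (2 * κ)) atTop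
      (nhds (x₂ T)) := by
    have hc : Tendsto (fun n : ℕ => T - (1 - k) ^ n * (2 * κ)) atTop (nhds T) := by
      simpa using hlim0.const_sub T
    have := ((h₂ T).continuousAt.tendsto.comp hc).sub hlim0
    simpa using this
  have := le_of_tendsto' hlim (fun n => hiter n T le_rfl)
  linarith [hlt T]


lemma no_two_unbounded (η ε κ c : ℝ) (hη : 0 < η) (hε : 0 < ε) (hκ : 0 < κ) (hc : c ≠ 0)
    (p ℓ : ℝ → ℝ) (hℓ : ∀ t, HasDerivAt ℓ (p t) t) (hℓb : Tendsto ℓ atBot atBot)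
    (hp1 : ∀ t, 1 ≤ p t)
    (hp0 : ∀ δ > 0, ∃ T, ∀ t ≤ T, |p t - 1| ≤ δ)
    (x₁ x₂ : ℝ → ℝ)
    (h₁ : ∀ t, HasDerivAt x₁ (-η * p t * x₁ t + ε * Real.sin (x₁ t + t)) t)
    (h₂ : ∀ t, HasDerivAt x₂ (-η * p t * x₂ t + ε * Real.sin (x₂ t + t)) t)
    (b₁ : ∀ t, |x₁ t - c * Real.exp (-(η * ℓ t))| ≤ κ)
    (b₂ : ∀ t, |x₂ t - c * Real.exp (-(η * ℓ t))| ≤ κ) (hlt : ∀ t, x₁ t < x₂ t) : False := by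
  set K₀ := ε * (2 * η + ε) + ε * (1 + 2 * η * κ + ε) + 2 * ε * η with hK₀
  have hK₀pos : 0 < K₀ := by positivity
  obtain ⟨V, hV⟩ : ∃ V : ℝ → ℝ, ∀ t, V t = -(1 / (η * c)) * Real.exp (η * ℓ t) :=
    ⟨_, fun _ => rfl⟩
  have hVd : ∀ t, HasDerivAt V (η * p t * V t) t := by
    intro t
    have := (((hℓ t).const_mul η).exp).const_mul (-(1 / (η * c)))
    rw [show V = fun t => -(1 / (η * c)) * Real.exp (η * ℓ t) from funext hV]
    refine this.congr_deriv ?_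
    simp only; ring
  have hVp : ∀ t, V t * (-η * c * Real.exp (-(η * ℓ t))) = 1 := by
    intro t
    rw [hV, Real.exp_neg]
    have := (Real.exp_pos (η * ℓ t)).ne'
    field_simp
  have hVlim : Tendsto V atBot (nhds 0) := by
    rw [show V = fun t => -(1 / (η * c)) * Real.exp (η * ℓ t) from funext hV]
    have : Tendsto (fun t => Real.exp (η * ℓ t)) atBot (nhds 0) :=
      Real.tendsto_exp_atBot.comp (hℓb.const_mul_atBot hη)
    simpa using this.const_mul (-(1 / (η * c)))
  obtain ⟨ρ, hρ, hρ1, hρ2⟩ : ∃ ρ > 0, ρ * K₀ ≤ η / 4 ∧ ε * ρ ≤ 1 / 2 := by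
    refine ⟨min (η / 4 / K₀) (1 / 2 / ε), by positivity, ?_, ?_⟩
    · rw [← le_div_iff₀ hK₀pos]; exact min_le_left _ _
    · rw [mul_comm, ← le_div_iff₀ hε]; exact min_le_right _ _
  obtain ⟨T₁, hT₁⟩ : ∃ T, ∀ t ≤ T, |V t| ≤ ρ := by
    have := hVlim.abs.eventually (ge_mem_nhds (show |(0 : ℝ)| < ρ by simpa using hρ))
    exact eventually_atBot.1 this
  obtain ⟨T₂, hT₂⟩ := hp0 (min 1 (η / 4 / ε)) (by positivity)
  obtain ⟨T, hTT₁, hTT₂⟩ : ∃ T, T ≤ T₁ ∧ T ≤ T₂ := ⟨min T₁ T₂, min_le_left _ _, min_le_right _ _⟩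
  have hp2 : ∀ t ≤ T, p t ≤ 2 := fun t ht => by
    have := (abs_le.1 ((hT₂ t (ht.trans hTT₂)).trans (min_le_left _ _))).2; linarith
  have hp3 : ∀ t ≤ T, ε * |p t - 1| ≤ η / 4 := fun t ht => by
    have := (hT₂ t (ht.trans hTT₂)).trans (min_le_right _ _)
    rwa [le_div_iff₀ hε, mul_comm] at this
  have hV' : ∀ t ≤ T, |V t| ≤ ρ := fun t ht => hT₁ t (ht.trans hTT₁)
  obtain ⟨d, hd⟩ : ∃ d : ℝ → ℝ, ∀ t, d t = x₂ t - x₁ t := ⟨_, fun _ => rfl⟩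
  obtain ⟨m, hm⟩ : ∃ m : ℝ → ℝ, ∀ t, m t = (x₁ t + x₂ t) / 2 + t := ⟨_, fun _ => rfl⟩
  obtain ⟨r, hr⟩ : ∃ r : ℝ → ℝ, ∀ t, r t = (x₁ t + x₂ t) / 2 - c * Real.exp (-(η * ℓ t)) :=
    ⟨_, fun _ => rfl⟩
  obtain ⟨S, hS⟩ : ∃ S : ℝ → ℝ, ∀ t, S t = (Real.sin (x₁ t + t) + Real.sin (x₂ t + t)) / 2 :=
    ⟨_, fun _ => rfl⟩
  have hdpos : ∀ t, 0 < d t := fun t => by rw [hd]; linarith [hlt t]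
  have hdle : ∀ t, d t ≤ 2 * κ := fun t => by
    have e1 := abs_le.1 (b₁ t)
    have e2 := abs_le.1 (b₂ t)
    rw [hd]; linarith
  have hrle : ∀ t, |r t| ≤ κ := fun t => by
    have e1 := abs_le.1 (b₁ t)
    have e2 := abs_le.1 (b₂ t)
    rw [hr, abs_le]; constructor <;> linarith
  have hSle : ∀ t, |S t| ≤ 1 := fun t => by
    have e1 := abs_le.1 (Real.abs_sin_le_one (x₁ t + t))
    have e2 := abs_le.1 (Real.abs_sin_le_one (x₂ t + t))
    rw [hS, abs_le]; constructor <;> linarith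
  obtain ⟨d', hd'⟩ : ∃ d' : ℝ → ℝ, ∀ t, d' t =
    -η * p t * d t + 2 * ε * Real.sin (d t / 2) * Real.cos (m t) := ⟨_, fun _ => rfl⟩
  have hdd : ∀ t, HasDerivAt d (d' t) t := by
    intro t
    rw [show d = fun t => x₂ t - x₁ t from funext hd]
    refine ((h₂ t).sub (h₁ t)).congr_deriv ?_
    rw [hd', hd, hm]
    have := Real.sin_sub_sin (x₂ t + t) (x₁ t + t)
    rw [show (x₂ t + t - (x₁ t + t)) / 2 = (x₂ t - x₁ t) / 2 by ring,
      show (x₂ t + t + (x₁ t + t)) / 2 = (x₁ t + x₂ t) / 2 + t by ring] at this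
    linear_combination ε * this
  have hmd : ∀ t, HasDerivAt m (1 - η * p t * (c * Real.exp (-(η * ℓ t)) + r t) + ε * S t) t := by
    intro t
    rw [show m = fun t => (x₁ t + x₂ t) / 2 + t from funext hm]
    refine ((((h₁ t).add (h₂ t)).div_const 2).add (hasDerivAt_id t)).congr_deriv ?_
    rw [hr, hS]; ring
  obtain ⟨R, hR⟩ : ∃ R : ℝ → ℝ, ∀ t, R t = ε * (Real.cos (d t / 2) * d' t * Real.sin (m t)) +
    2 * ε * (Real.sin (d t / 2) * Real.cos (m t) * (1 - η * p t * r t + ε * S t)) +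
    2 * ε * (Real.sin (d t / 2) * Real.sin (m t) * (η * p t)) := ⟨_, fun _ => rfl⟩
  obtain ⟨L, hL⟩ : ∃ L : ℝ → ℝ, ∀ t, L t =
    d t - 2 * ε * (Real.sin (d t / 2) * Real.sin (m t) * V t) := ⟨_, fun _ => rfl⟩
  have hLd : ∀ t, HasDerivAt L (-η * p t * d t +
      2 * ε * (Real.sin (d t / 2) * Real.cos (m t) * (1 - p t)) - V t * R t) t := by
    intro t
    rw [show L = fun t => d t - 2 * ε * (Real.sin (d t / 2) * Real.sin (m t) * V t)
      from funext hL]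
    refine ((hdd t).sub (((((hdd t).div_const 2).sin.mul (hmd t).sin).mul
      (hVd t)).const_mul (2 * ε))).congr_deriv ?_
    rw [hR]
    have e := hVp t
    have e2 := hd' t
    simp only [Pi.mul_apply]
    linear_combination e2 +
      (- 2 * ε * Real.sin (d t / 2) * Real.cos (m t) * p t) * e
  have hsd : ∀ t, |Real.sin (d t / 2)| ≤ d t / 2 := fun t => by
    have := Real.abs_sin_le_abs (x := d t / 2)
    rwa [abs_of_pos (half_pos (hdpos t))] at this
  have hd'le : ∀ t ≤ T, |d' t| ≤ (2 * η + ε) * d t := by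
    intro t ht
    rw [hd']
    have e1 : |-η * p t * d t| ≤ 2 * η * d t := by
      rw [abs_mul, abs_mul, abs_neg, abs_of_pos hη, abs_of_pos (hdpos t),
        abs_of_pos (by linarith [hp1 t])]
      have := mul_le_mul_of_nonneg_left (hp2 t ht) (mul_pos hη (hdpos t)).le
      linarith
    have e2 : |2 * ε * Real.sin (d t / 2) * Real.cos (m t)| ≤ 2 * ε * (d t / 2) * 1 := by
      rw [abs_mul, abs_mul, abs_of_pos (by positivity : 0 < 2 * ε)]
      have := hdpos t
      gcongr
      · exact hsd t
      · exact Real.abs_cos_le_one _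
    calc _ ≤ _ := abs_add_le _ _
      _ ≤ _ := add_le_add e1 e2
      _ = _ := by ring
  have hRle : ∀ t ≤ T, |R t| ≤ K₀ * d t := by
    intro t ht
    have hdp := hdpos t
    have hpa : |p t| ≤ 2 := by rw [abs_of_pos (by linarith [hp1 t])]; exact hp2 t ht
    have a1 : |ε * (Real.cos (d t / 2) * d' t * Real.sin (m t))| ≤
        ε * (1 * ((2 * η + ε) * d t) * 1) := by
      rw [abs_mul, abs_mul, abs_mul, abs_of_pos hε]
      gcongr
      · exact Real.abs_cos_le_one _
      · exact hd'le t ht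
      · exact Real.abs_sin_le_one _
    have a20 : |1 - η * p t * r t + ε * S t| ≤ 1 + η * 2 * κ + ε * 1 := by
      calc _ ≤ |1 - η * p t * r t| + |ε * S t| := abs_add_le _ _
        _ ≤ |(1 : ℝ)| + |η * p t * r t| + |ε * S t| := by gcongr; exact abs_sub _ _
        _ ≤ _ := by
          rw [abs_one, abs_mul, abs_mul, abs_mul, abs_of_pos hη, abs_of_pos hε]
          gcongr
          · exact hrle t
          · exact hSle t
    have a2 : |2 * ε * (Real.sin (d t / 2) * Real.cos (m t) * (1 - η * p t * r t + ε * S t))| ≤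
        2 * ε * (d t / 2 * 1 * (1 + η * 2 * κ + ε * 1)) := by
      simp only [abs_mul, abs_two, abs_of_pos hε]
      gcongr
      · exact hsd t
      · exact Real.abs_cos_le_one _
    have a3 : |2 * ε * (Real.sin (d t / 2) * Real.sin (m t) * (η * p t))| ≤
        2 * ε * (d t / 2 * 1 * (η * 2)) := by
      simp only [abs_mul, abs_two, abs_of_pos hε, abs_of_pos hη]
      gcongr
      · exact hsd t
      · exact Real.abs_sin_le_one _
    rw [hR]
    calc _ ≤ _ := abs_add_three _ _ _
      _ ≤ _ := add_le_add (add_le_add a1 a2) a3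
      _ = _ := by rw [hK₀]; ring
  have hL' : ∀ t ≤ T, -η * p t * d t +
      2 * ε * (Real.sin (d t / 2) * Real.cos (m t) * (1 - p t)) - V t * R t ≤
      -(η / 2) * d t := by
    intro t ht
    have hdp := hdpos t
    have e1 : |V t * R t| ≤ ρ * (K₀ * d t) := by
      rw [abs_mul]
      exact mul_le_mul (hV' t ht) (hRle t ht) (abs_nonneg _) hρ.le
    have e2 : |2 * ε * (Real.sin (d t / 2) * Real.cos (m t) * (1 - p t))| ≤
        2 * (d t / 2) * (ε * |p t - 1|) := by
      simp only [abs_mul, abs_two, abs_of_pos hε, abs_sub_comm (1 : ℝ) (p t)]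
      calc _ ≤ 2 * ε * (d t / 2 * 1 * |p t - 1|) := by
            gcongr
            · exact hsd t
            · exact Real.abs_cos_le_one _
        _ = _ := by ring
    have e3 := mul_le_mul_of_nonneg_left (hp3 t ht) hdp.le
    have e4 := mul_le_mul_of_nonneg_right hρ1 hdp.le
    have e5 := mul_le_mul_of_nonneg_left (hp1 t) (mul_pos hη hdp).le
    have e6 := (abs_le.1 e1).1
    have e7 := (abs_le.1 e2).2
    nlinarith
  have hLc : ∀ t ≤ T, |L t - d t| ≤ d t / 2 := by
    intro t ht
    have hdp := hdpos t
    rw [hL, show d t - 2 * ε * (Real.sin (d t / 2) * Real.sin (m t) * V t) - d t =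
      - (2 * ε * (Real.sin (d t / 2) * Real.sin (m t) * V t)) by ring, abs_neg]
    simp only [abs_mul, abs_two, abs_of_pos hε]
    calc _ ≤ 2 * ε * (d t / 2 * 1 * ρ) := by
          gcongr
          · exact hsd t
          · exact Real.abs_sin_le_one _
          · exact hV' t ht
      _ = d t * (ε * ρ) := by ring
      _ ≤ d t * (1 / 2) := by gcongr
      _ = _ := by ring
  have hanti : AntitoneOn L (Iic T) := anti_Iic (fun t _ => hLd t) (fun t ht => by
    have := hL' t ht
    have := mul_pos (half_pos hη) (hdpos t)
    linarith)
  set b := d T / 3 with hb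
  have hbpos : 0 < b := by have := hdpos T; positivity
  have hdb : ∀ t ≤ T, b ≤ d t := by
    intro t ht
    have e1 := hanti (show t ∈ Iic T from ht) (mem_Iic.2 (le_refl T)) ht
    have e2 := abs_le.1 (hLc t ht)
    have e3 := abs_le.1 (hLc T le_rfl)
    linarith [e2.1, e2.2, e3.1]
  have hanti2 : AntitoneOn (fun t => L t + η / 2 * b * t) (Iic T) := by
    apply anti_Iic (fun t _ => (hLd t).add ((hasDerivAt_id t).const_mul (η / 2 * b)))
    intro t ht
    have e1 := hL' t ht
    have e2 := mul_le_mul_of_nonneg_left (hdb t ht) (half_pos hη).le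
    linarith
  have hfin : ∀ t ≤ T, L T + η / 2 * b * (T - t) ≤ 3 * κ := by
    intro t ht
    have e1 := hanti2 (show t ∈ Iic T from ht) (mem_Iic.2 (le_refl T)) ht
    simp only at e1
    have e2 := abs_le.1 (hLc t ht)
    have e3 := hdle t
    linarith [e2.2]
  have hLT : 0 < L T := by
    have e2 := abs_le.1 (hLc T le_rfl)
    have := hdpos T
    linarith [e2.1]
  have hq : 0 < η / 2 * b := by positivity
  have := hfin (T - 3 * κ / (η / 2 * b)) (by
    have : 0 < 3 * κ / (η / 2 * b) := by positivity
    linarith)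
  rw [sub_sub_cancel, mul_div_cancel₀ _ hq.ne'] at this
  linarith


lemma sol_scaled {η ε : ℝ} {p ℓ : ℝ → ℝ} (hℓ : ∀ t, HasDerivAt ℓ (p t) t) {x : ℝ → ℝ}
    (hx : ∀ t, HasDerivAt x (-η * p t * x t + ε * Real.sin (x t + t)) t) (t : ℝ) :
    HasDerivAt (fun s => Real.exp (η * ℓ s) * x s)
      (Real.exp (η * ℓ t) * (ε * Real.sin (x t + t))) t := by
  refine ((((hℓ t).const_mul η).exp).mul (hx t)).congr_deriv ?_
  ring

lemma sol_gron {η ε : ℝ} (hε : 0 < ε) {p ℓ : ℝ → ℝ} (hℓ : ∀ t, HasDerivAt ℓ (p t) t)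
    {x y : ℝ → ℝ}
    (hx : ∀ t, HasDerivAt x (-η * p t * x t + ε * Real.sin (x t + t)) t)
    (hy : ∀ t, HasDerivAt y (-η * p t * y t + ε * Real.sin (y t + t)) t) (s t : ℝ) :
    |x s - y s| ≤ Real.exp (-(η * ℓ s)) * Real.exp (η * ℓ t) * Real.exp (ε * |s - t|)
      * |x t - y t| := by
  have := gron (fun t => (sol_scaled hℓ hx t).sub (sol_scaled hℓ hy t)) (K := ε) (fun t => by
    have e := Real.abs_sin_sub_sin_le (x t + t) (y t + t)
    rw [add_sub_add_right_eq_sub] at e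
    simp only [Pi.sub_apply]
    rw [← mul_sub, ← mul_sub, ← mul_sub, abs_mul, abs_mul, abs_mul, abs_of_pos hε,
      mul_left_comm]
    gcongr) s t
  simp only [Pi.sub_apply] at this
  rw [← mul_sub, ← mul_sub, abs_mul, abs_mul, abs_of_pos (Real.exp_pos _),
    abs_of_pos (Real.exp_pos _)] at this
  rw [Real.exp_neg, mul_assoc, mul_assoc, ← div_eq_inv_mul, le_div_iff₀ (Real.exp_pos _)]
  linarith

lemma sol_unique {η ε : ℝ} (hε : 0 < ε) {p ℓ : ℝ → ℝ} (hℓ : ∀ t, HasDerivAt ℓ (p t) t)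
    {x y : ℝ → ℝ}
    (hx : ∀ t, HasDerivAt x (-η * p t * x t + ε * Real.sin (x t + t)) t)
    (hy : ∀ t, HasDerivAt y (-η * p t * y t + ε * Real.sin (y t + t)) t) {t : ℝ}
    (h : x t = y t) : x = y := by
  funext s
  have := sol_gron hε hℓ hx hy s t
  rw [h, sub_self, abs_zero, mul_zero] at this
  have := abs_nonpos_iff.1 this
  linarith

lemma sol_exists {η ε : ℝ} (hε : 0 < ε) {p ℓ : ℝ → ℝ} (hℓ : ∀ t, HasDerivAt ℓ (p t) t)
    (t₀ x₀ : ℝ) : ∃ x : ℝ → ℝ, x t₀ = x₀ ∧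
      ∀ t, HasDerivAt x (-η * p t * x t + ε * Real.sin (x t + t)) t := by
  have hc : Continuous ℓ := continuous_iff_continuousAt.2 fun t => (hℓ t).continuousAt
  obtain ⟨z, hz0, hz⟩ := global_sol
    (fun s z => Real.exp (η * ℓ s) * (ε * Real.sin (Real.exp (-(η * ℓ s)) * z + s)))
    ⟨ε, hε.le⟩ (fun s => Real.exp (η * ℓ s) * ε) (fun x => by fun_prop) (fun t => by
      apply LipschitzWith.of_dist_le_mul
      intro a b
      simp only [Real.dist_eq, NNReal.coe_mk]
      have e := Real.abs_sin_sub_sin_le (Real.exp (-(η * ℓ t)) * a + t)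
        (Real.exp (-(η * ℓ t)) * b + t)
      rw [add_sub_add_right_eq_sub, ← mul_sub, abs_mul, abs_of_pos (Real.exp_pos _)] at e
      rw [← mul_sub, ← mul_sub, abs_mul, abs_mul, abs_of_pos hε, abs_of_pos (Real.exp_pos _)]
      calc _ ≤ Real.exp (η * ℓ t) * (ε * (Real.exp (-(η * ℓ t)) * |a - b|)) := by gcongr
        _ = (Real.exp (η * ℓ t) * Real.exp (-(η * ℓ t))) * (ε * |a - b|) := by ring
        _ = _ := by
          rw [← Real.exp_add, add_neg_cancel, Real.exp_zero, one_mul]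
          rfl)
    (by fun_prop) (fun t x => by
      rw [abs_mul, abs_mul, abs_of_pos hε, abs_of_pos (Real.exp_pos _)]
      have := Real.abs_sin_le_one (Real.exp (-(η * ℓ t)) * x + t)
      have h2 := Real.exp_pos (η * ℓ t)
      calc _ ≤ Real.exp (η * ℓ t) * (ε * 1) := by gcongr
        _ = _ := by ring) t₀ (Real.exp (η * ℓ t₀) * x₀)
  refine ⟨fun s => Real.exp (-(η * ℓ s)) * z s, ?_, fun t => ?_⟩
  · simp only [hz0]; rw [← mul_assoc, ← Real.exp_add]; simp
  · refine ((((hℓ t).const_mul η).neg.exp).mul (hz t)).congr_deriv ?_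
    have : Real.exp (-(η * ℓ t)) * Real.exp (η * ℓ t) = 1 := by rw [← Real.exp_add]; simp
    simp only [Pi.neg_apply]
    linear_combination (ε * Real.sin (Real.exp (-(η * ℓ t)) * z t + t)) * this

lemma sol_asym {η ε : ℝ} (hη : 0 < η) (hε : 0 < ε) {p ℓ : ℝ → ℝ}
    (hℓ : ∀ t, HasDerivAt ℓ (p t) t) (hp1 : ∀ t, 1 ≤ p t) {x : ℝ → ℝ}
    (hx : ∀ t, HasDerivAt x (-η * p t * x t + ε * Real.sin (x t + t)) t) :
    ∃ c, ∀ t, |x t - c * Real.exp (-(η * ℓ t))| ≤ ε / η := by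
  have hexp : ∀ t, HasDerivAt (fun s => ε / η * Real.exp (η * ℓ s))
      (ε * p t * Real.exp (η * ℓ t)) t := fun t => by
    refine ((((hℓ t).const_mul η).exp).const_mul (ε / η)).congr_deriv ?_
    field_simp
  have hmono : Monotone (fun s => Real.exp (η * ℓ s) * x s + ε / η * Real.exp (η * ℓ s)) := by
    apply monotone_of_hasDerivAt_nonneg (fun t => (sol_scaled hℓ hx t).add (hexp t))
    intro t
    have e1 := Real.neg_one_le_sin (x t + t)
    have e2 := hp1 t
    have : 0 ≤ Real.exp (η * ℓ t) * (ε * (Real.sin (x t + t) + p t)) := by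
      have : 0 ≤ Real.sin (x t + t) + p t := by linarith
      positivity
    simp only [Pi.zero_apply]
    linarith
  have hanti : Monotone (fun s => ε / η * Real.exp (η * ℓ s) - Real.exp (η * ℓ s) * x s) := by
    apply monotone_of_hasDerivAt_nonneg (fun t => (hexp t).sub (sol_scaled hℓ hx t))
    intro t
    have e1 := Real.sin_le_one (x t + t)
    have e2 := hp1 t
    have : 0 ≤ Real.exp (η * ℓ t) * (ε * (p t - Real.sin (x t + t))) := by
      have : 0 ≤ p t - Real.sin (x t + t) := by linarith
      positivity
    simp only [Pi.zero_apply]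
    linarith
  have hcross : ∀ s r, Real.exp (η * ℓ s) * x s - ε / η * Real.exp (η * ℓ s) ≤
      Real.exp (η * ℓ r) * x r + ε / η * Real.exp (η * ℓ r) := by
    intro s r
    have e1 := hanti (min_le_left s r)
    have e2 := hmono (min_le_right s r)
    simp only at e1 e2
    have : 0 < ε / η * Real.exp (η * ℓ (min s r)) := by positivity
    linarith
  have hbdd : BddAbove (range fun s => Real.exp (η * ℓ s) * x s - ε / η * Real.exp (η * ℓ s)) :=
    ⟨_, by rintro _ ⟨s, rfl⟩; exact hcross s 0⟩
  refine ⟨⨆ s, (Real.exp (η * ℓ s) * x s - ε / η * Real.exp (η * ℓ s)), fun t => ?_⟩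
  have e1 := le_ciSup hbdd t
  have e2 : (⨆ s, (Real.exp (η * ℓ s) * x s - ε / η * Real.exp (η * ℓ s))) ≤
    Real.exp (η * ℓ t) * x t + ε / η * Real.exp (η * ℓ t) := ciSup_le fun s => hcross s t
  set c := ⨆ s, (Real.exp (η * ℓ s) * x s - ε / η * Real.exp (η * ℓ s))
  have hp := Real.exp_pos (η * ℓ t)
  rw [Real.exp_neg, ← div_eq_mul_inv, abs_le]
  constructor
  · have : c / Real.exp (η * ℓ t) ≤ x t + ε / η := by
      rw [div_le_iff₀ hp]; linarith
    linarith
  · have : x t - ε / η ≤ c / Real.exp (η * ℓ t) := by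
      rw [le_div_iff₀ hp]; linarith
    linarith

lemma sol_order {η ε : ℝ} (hε : 0 < ε) {p ℓ : ℝ → ℝ} (hℓ : ∀ t, HasDerivAt ℓ (p t) t)
    {x y : ℝ → ℝ}
    (hx : ∀ t, HasDerivAt x (-η * p t * x t + ε * Real.sin (x t + t)) t)
    (hy : ∀ t, HasDerivAt y (-η * p t * y t + ε * Real.sin (y t + t)) t) {t : ℝ}
    (h : x t < y t) (s : ℝ) : x s < y s := by
  by_contra hs
  push Not at hs
  have hc : Continuous (fun s => y s - x s) := continuous_iff_continuousAt.2
    fun s => (hy s).continuousAt.sub (hx s).continuousAt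
  obtain ⟨r, hr⟩ := mem_range_of_exists_le_of_exists_ge hc (c := 0) ⟨s, by linarith⟩
    ⟨t, by linarith⟩
  have := sol_unique hε hℓ hx hy (t := r) (by simp only at hr; linarith)
  rw [this] at h
  exact lt_irrefl _ h

lemma x_conj (η ε : ℝ) (hη : 0 < η) (hε : 0 < ε) (p ℓ : ℝ → ℝ)
    (hℓ : ∀ t, HasDerivAt ℓ (p t) t) (hℓb : Tendsto ℓ atBot atBot) (hp1 : ∀ t, 1 ≤ p t)
    (hpl : ∀ δ > 0, ∃ T, ∀ s t, s ≤ t → t ≤ T → |p t - p s| ≤ δ * (t - s))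
    (hp0 : ∀ δ > 0, ∃ T, ∀ t ≤ T, |p t - 1| ≤ δ) :
    ∃ (φ : ℝ → ℝ → ℝ → ℝ) (h g : ℝ → ℝ → ℝ),
      (∀ t x, φ t x t = x) ∧
      (∀ t x s, HasDerivAt (φ t x) (-η * p s * φ t x s + ε * Real.sin (φ t x s + s)) s) ∧
      (∀ x : ℝ → ℝ, (∀ t, HasDerivAt x (-η * p t * x t + ε * Real.sin (x t + t)) t) →
        ∀ t, φ t (x t) = x) ∧
      (∀ t s, Continuous (fun x => φ t x s)) ∧
      (∀ t, Continuous (h t)) ∧ (∀ t, Continuous (g t)) ∧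
      (∀ t x, g t (h t x) = x) ∧ (∀ t x, h t (g t x) = x) ∧
      (∀ t x, |h t x - x| ≤ ε / η) ∧
      (∀ x : ℝ → ℝ, (∀ t, HasDerivAt x (-η * p t * x t + ε * Real.sin (x t + t)) t) →
        ∃ c, ∀ t, h t (x t) = c * Real.exp (-(η * ℓ t))) ∧
      (∀ c, ∃ x : ℝ → ℝ, (∀ t, HasDerivAt x (-η * p t * x t + ε * Real.sin (x t + t)) t) ∧
        ∀ t, g t (c * Real.exp (-(η * ℓ t))) = x t) := by
  have hκ : 0 < ε / η := by positivity
  choose φ hφ0 hφ using sol_exists (η := η) hε hℓ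
  have hφu : ∀ x : ℝ → ℝ, (∀ t, HasDerivAt x (-η * p t * x t + ε * Real.sin (x t + t)) t) →
        ∀ t, φ t (x t) = x := fun x hx t => sol_unique hε hℓ (hφ _ _) hx (hφ0 _ _)
  have hφc : ∀ t s, Continuous (fun x => φ t x s) := by
    intro t s
    have hpos : 0 ≤ Real.exp (-(η * ℓ s)) * Real.exp (η * ℓ t) * Real.exp (ε * |s - t|) := by
      positivity
    have : LipschitzWith ⟨_, hpos⟩ (fun x => φ t x s) := by
      apply LipschitzWith.of_dist_le_mul
      intro a b
      have := sol_gron hε hℓ (hφ t a) (hφ t b) s t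
      rw [hφ0, hφ0] at this
      exact this
    exact this.continuous
  have hC : ∃ C : (ℝ → ℝ) → ℝ, ∀ x : ℝ → ℝ,
      (∀ t, HasDerivAt x (-η * p t * x t + ε * Real.sin (x t + t)) t) →
      ∀ t, |x t - C x * Real.exp (-(η * ℓ t))| ≤ ε / η := by
    have : ∀ x : ℝ → ℝ, ∃ c,
      (∀ t, HasDerivAt x (-η * p t * x t + ε * Real.sin (x t + t)) t) →
      ∀ t, |x t - c * Real.exp (-(η * ℓ t))| ≤ ε / η := by
      intro x
      by_cases hx : ∀ t, HasDerivAt x (-η * p t * x t + ε * Real.sin (x t + t)) t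
      · obtain ⟨c, hc⟩ := sol_asym hη hε hℓ hp1 hx
        exact ⟨c, fun _ => hc⟩
      · exact ⟨0, fun h => absurd h hx⟩
    choose C hC using this
    exact ⟨C, hC⟩
  obtain ⟨C, hC⟩ := hC
  obtain ⟨h, hh⟩ : ∃ h : ℝ → ℝ → ℝ, ∀ t x, h t x = C (φ t x) * Real.exp (-(η * ℓ t)) :=
    ⟨_, fun _ _ => rfl⟩
  have hhd : ∀ t x, |h t x - x| ≤ ε / η := by
    intro t x
    have := hC _ (hφ t x) t
    rwa [hφ0, ← hh, abs_sub_comm] at this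
  have hexp0 : Tendsto (fun t => Real.exp (η * ℓ t)) atBot (nhds 0) :=
      Real.tendsto_exp_atBot.comp (hℓb.const_mul_atBot hη)
  have hCc : ∀ t, Continuous (fun x => C (φ t x)) := by
    intro t
    apply continuous_of_uniform_approx_of_continuous
    intro u hu
    obtain ⟨δ, hδ, hu⟩ := Metric.mem_uniformity_dist.1 hu
    have h1 : Tendsto (fun t => ε / η * Real.exp (η * ℓ t)) atBot (nhds 0) := by
      simpa using hexp0.const_mul (ε / η)
    obtain ⟨s, hs⟩ := (h1.eventually (gt_mem_nhds hδ)).exists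
    refine ⟨fun x => Real.exp (η * ℓ s) * φ t x s, continuous_const.mul (hφc t s), fun x => hu ?_⟩
    refine lt_of_le_of_lt ?_ hs
    have := hC _ (hφ t x) s
    have e : Real.exp (η * ℓ s) * Real.exp (-(η * ℓ s)) = 1 := by rw [← Real.exp_add]; simp
    rw [Real.dist_eq, abs_sub_comm,
      show Real.exp (η * ℓ s) * φ t x s - C (φ t x) =
      Real.exp (η * ℓ s) * (φ t x s - C (φ t x) * Real.exp (-(η * ℓ s))) by
        linear_combination (C (φ t x)) * e, abs_mul, abs_of_pos (Real.exp_pos _), mul_comm]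
    gcongr
  have hhc : ∀ t, Continuous (h t) := by
    intro t
    rw [show h t = fun x => C (φ t x) * Real.exp (-(η * ℓ t)) from funext (hh t)]
    exact (hCc t).mul continuous_const
  have hlt : ∀ t x y, x < y → h t x ≠ h t y := by
    intro t x y hxy he
    rw [hh, hh] at he
    have he := mul_right_cancel₀ (Real.exp_pos _).ne' he
    have ho := sol_order hε hℓ (hφ t x) (hφ t y) (t := t) (by rwa [hφ0, hφ0])
    have b1 := hC _ (hφ t x)
    have b2 := hC _ (hφ t y)
    rw [← he] at b2
    by_cases hc : C (φ t x) = 0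
    · simp only [hc, zero_mul, sub_zero] at b1 b2
      exact no_two_bounded η ε _ hη hε hκ p hp1 hpl hp0 _ _ (hφ t x) (hφ t y) b1 b2 ho
    · exact no_two_unbounded η ε _ _ hη hε hκ hc p ℓ hℓ hℓb hp1 hp0 _ _ (hφ t x) (hφ t y) b1 b2 ho
  have hinj : ∀ t, Function.Injective (h t) := by
    intro t x y hxy
    rcases lt_trichotomy x y with h1 | h1 | h1
    · exact absurd hxy (hlt t x y h1)
    · exact h1
    · exact absurd hxy.symm (hlt t y x h1)
  have hmono : ∀ t, StrictMono (h t) := by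
    intro t
    rcases (hhc t).strictMono_of_inj (hinj t) with h1 | h1
    · exact h1
    · exfalso
      have e0 : (0 : ℝ) < 2 * (ε / η) + 1 := by positivity
      have e1 := h1 e0
      have e2 := (abs_le.1 (hhd t 0)).2
      have e3 := (abs_le.1 (hhd t (2 * (ε / η) + 1))).1
      linarith
  have hsurj : ∀ t, Function.Surjective (h t) := by
    intro t
    apply (hhc t).surjective
    · apply tendsto_atTop_mono (f := fun x => x - ε / η)
      · intro x
        have := (abs_le.1 (hhd t x)).1
        linarith
      · exact tendsto_atTop_add_const_right _ _ tendsto_id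
    · refine tendsto_atBot_mono (fun x => ?_) (tendsto_atBot_add_const_right _ (ε / η) tendsto_id)
      have := (abs_le.1 (hhd t x)).2
      simp only [id]
      linarith
  set I := fun t => StrictMono.orderIsoOfSurjective (h t) (hmono t) (hsurj t) with hI
  have hgh : ∀ t x, (I t).symm (h t x) = x := fun t x => (I t).symm_apply_apply x
  have hhg : ∀ t x, h t ((I t).symm x) = x := fun t x => (I t).apply_symm_apply x
  have hcst : ∀ x : ℝ → ℝ, (∀ t, HasDerivAt x (-η * p t * x t + ε * Real.sin (x t + t)) t) →
        ∀ t, h t (x t) = C x * Real.exp (-(η * ℓ t)) := by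
    intro x hx t
    rw [hh, hφu x hx t]
  refine ⟨φ, h, fun t => (I t).symm, hφ0, hφ, hφu, hφc, hhc, fun t => (I t).symm.continuous,
    hgh, hhg, hhd, fun x hx => ⟨C x, hcst x hx⟩, fun c => ?_⟩
  set x := φ 0 ((I 0).symm (c * Real.exp (-(η * ℓ 0)))) with hxdef
  have hx : ∀ t, HasDerivAt x (-η * p t * x t + ε * Real.sin (x t + t)) t := hφ _ _
  refine ⟨x, hx, fun t => ?_⟩
  have e0 := hcst x hx 0
  have : x 0 = (I 0).symm (c * Real.exp (-(η * ℓ 0))) := hφ0 _ _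
  rw [this, hhg] at e0
  have e1 := mul_right_cancel₀ (Real.exp_pos _).ne' e0
  rw [e1, ← hcst x hx t]
  exact hgh t (x t)


noncomputable def Kop (η ε : ℝ) (ℓ : ℝ → ℝ) (u : ℝ → ℝ) (t : ℝ) : ℝ :=
  Real.exp (η * ℓ t) * ∫ s in Ioi t, Real.exp (-(η * ℓ s)) * (ε * Real.cos (u s + s))

lemma dom_int {η ε : ℝ} {p ℓ : ℝ → ℝ} (hη : 0 < η) (hε : 0 < ε)
    (hℓ : ∀ t, HasDerivAt ℓ (p t) t) (hℓt : Tendsto ℓ atTop atTop) (hp1 : ∀ t, 1 ≤ p t) (t : ℝ) :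
    IntegrableOn (fun s => ε * p s * Real.exp (-(η * ℓ s))) (Ioi t) ∧
    ∫ s in Ioi t, ε * p s * Real.exp (-(η * ℓ s)) = ε / η * Real.exp (-(η * ℓ t)) := by
  have hd : ∀ s ∈ Ici t, HasDerivAt (fun s => -(ε / η) * Real.exp (-(η * ℓ s)))
      (ε * p s * Real.exp (-(η * ℓ s))) s := by
    intro s _
    have := ((((hℓ s).const_mul η).neg).exp).const_mul (-(ε / η))
    refine this.congr_deriv ?_
    have e : ε / η * η = ε := by field_simp
    simp only [Pi.neg_apply]
    linear_combination (p s * Real.exp (-(η * ℓ s))) * e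
  have hpos : ∀ s ∈ Ioi t, 0 ≤ ε * p s * Real.exp (-(η * ℓ s)) := by
    intro s _
    have := hp1 s
    positivity
  have hlim : Tendsto (fun s => -(ε / η) * Real.exp (-(η * ℓ s))) atTop (nhds 0) := by
    have : Tendsto (fun s => Real.exp (-(η * ℓ s))) atTop (nhds 0) :=
      Real.tendsto_exp_neg_atTop_nhds_zero.comp (hℓt.const_mul_atTop hη)
    simpa using this.const_mul (-(ε / η))
  refine ⟨integrableOn_Ioi_deriv_of_nonneg' hd hpos hlim, ?_⟩
  rw [integral_Ioi_of_hasDerivAt_of_nonneg' hd hpos hlim]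
  ring

lemma dom_le {η ε : ℝ} {p ℓ : ℝ → ℝ} (hε : 0 < ε) (hp1 : ∀ t, 1 ≤ p t) (v s : ℝ) :
    ‖Real.exp (-(η * ℓ s)) * (ε * Real.cos v)‖ ≤ ε * p s * Real.exp (-(η * ℓ s)) := by
  have h1 := Real.abs_cos_le_one v
  have h2 := hp1 s
  have h3 := Real.exp_pos (-(η * ℓ s))
  rw [Real.norm_eq_abs, abs_mul, abs_mul, abs_of_pos hε, abs_of_pos h3]
  calc _ ≤ Real.exp (-(η * ℓ s)) * (ε * p s) := by gcongr; linarith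
    _ = _ := by ring

lemma K_bound {η ε : ℝ} {p ℓ : ℝ → ℝ} (hη : 0 < η) (hε : 0 < ε)
    (hℓ : ∀ t, HasDerivAt ℓ (p t) t) (hℓt : Tendsto ℓ atTop atTop) (hp1 : ∀ t, 1 ≤ p t)
    (u : ℝ → ℝ) (t : ℝ) : |Kop η ε ℓ u t| ≤ ε / η := by
  obtain ⟨h1, h2⟩ := dom_int hη hε hℓ hℓt hp1 t
  have h3 := norm_integral_le_of_norm_le (f := fun s => Real.exp (-(η * ℓ s)) *
    (ε * Real.cos (u s + s))) h1 (Eventually.of_forall fun s => dom_le hε hp1 _ s)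
  rw [h2, Real.norm_eq_abs] at h3
  rw [Kop, abs_mul, abs_of_pos (Real.exp_pos _)]
  calc _ ≤ Real.exp (η * ℓ t) * (ε / η * Real.exp (-(η * ℓ t))) := by gcongr
    _ = ε / η * (Real.exp (η * ℓ t) * Real.exp (-(η * ℓ t))) := by ring
    _ = ε / η := by rw [← Real.exp_add, add_neg_cancel, Real.exp_zero, mul_one]

lemma K_deriv {η ε : ℝ} {p ℓ : ℝ → ℝ} (hη : 0 < η) (hε : 0 < ε)
    (hℓ : ∀ t, HasDerivAt ℓ (p t) t) (hℓt : Tendsto ℓ atTop atTop) (hp1 : ∀ t, 1 ≤ p t)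
    (u : ℝ → ℝ) (hu : Continuous u) (t : ℝ) :
    HasDerivAt (Kop η ε ℓ u) (η * p t * Kop η ε ℓ u t - ε * Real.cos (u t + t)) t := by
  have hℓc : Continuous ℓ := continuous_iff_continuousAt.2 fun t => (hℓ t).continuousAt
  have hcont : Continuous fun s => Real.exp (-(η * ℓ s)) * (ε * Real.cos (u s + s)) := by fun_prop
  have hint : ∀ t, IntegrableOn (fun s => Real.exp (-(η * ℓ s)) * (ε * Real.cos (u s + s)))
      (Ioi t) := fun t => (dom_int hη hε hℓ hℓt hp1 t).1.mono' hcont.aestronglyMeasurable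
        (Eventually.of_forall fun s => dom_le hε hp1 _ s)
  have h1 : HasDerivAt (fun r => ∫ s in Ioi r, Real.exp (-(η * ℓ s)) * (ε * Real.cos (u s + s)))
      (-(Real.exp (-(η * ℓ t)) * (ε * Real.cos (u t + t)))) t := by
    have e : (fun r => ∫ s in Ioi r, Real.exp (-(η * ℓ s)) * (ε * Real.cos (u s + s))) =
      fun r => (∫ s in Ioi 0, Real.exp (-(η * ℓ s)) * (ε * Real.cos (u s + s))) -
        ∫ s in (0 : ℝ)..r, Real.exp (-(η * ℓ s)) * (ε * Real.cos (u s + s)) := by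
      funext r
      rw [← intervalIntegral.integral_Ioi_sub_Ioi' (hint 0) (hint r)]
      ring
    rw [e]
    exact (intervalIntegral.integral_hasDerivAt_right (hcont.intervalIntegrable _ _)
      hcont.aestronglyMeasurable.stronglyMeasurableAtFilter hcont.continuousAt).const_sub _
  have h2 := ((hℓ t).const_mul η).exp.mul h1
  have e : Real.exp (η * ℓ t) * Real.exp (-(η * ℓ t)) = 1 := by rw [← Real.exp_add]; simp
  refine h2.congr_deriv ?_
  rw [Kop]
  linear_combination (-(ε * Real.cos (u t + t))) * e

lemma K_cont {η ε : ℝ} {p ℓ : ℝ → ℝ} (hη : 0 < η) (hε : 0 < ε)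
    (hℓ : ∀ t, HasDerivAt ℓ (p t) t) (hℓt : Tendsto ℓ atTop atTop) (hp1 : ∀ t, 1 ≤ p t)
    (φ : ℝ → ℝ → ℝ) (hφ : ∀ x, Continuous (φ x)) (hφ2 : ∀ s, Continuous fun x => φ x s) (t : ℝ) :
    Continuous fun x => Kop η ε ℓ (φ x) t := by
  have hℓc : Continuous ℓ := continuous_iff_continuousAt.2 fun t => (hℓ t).continuousAt
  unfold Kop
  refine continuous_const.mul ?_
  refine continuous_of_dominated (fun x => ?_)
    (fun x => Eventually.of_forall fun s => dom_le hε hp1 _ s)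
    (dom_int hη hε hℓ hℓt hp1 t).1 (Eventually.of_forall fun s => ?_)
  · have := hφ x
    exact Continuous.aestronglyMeasurable (by fun_prop)
  · have := hφ2 s
    fun_prop

lemma a_bounds {t : ℝ} (ht : t < 0) :
    -t ≤ (1 + t ^ 2) * (Real.pi / 2 + Real.arctan t) ∧
    (Real.pi / 2 + Real.arctan t) * (-t) ≤ 1 := by
  have h := Real.arctan_inv_of_neg ht
  set u := -t⁻¹ with hu
  have hu0 : 0 < u := by rw [hu]; simpa using ht
  have ha : Real.pi / 2 + Real.arctan t = Real.arctan u := by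
    rw [hu, Real.arctan_neg, h]; ring
  have htu : t * u = -1 := by rw [hu, mul_neg, mul_inv_cancel₀ ht.ne]
  rw [ha]
  have hθ : 0 < Real.arctan u := Real.arctan_pos.2 hu0
  constructor
  · have h1 := Real.sin_le (x := 2 * Real.arctan u) (by linarith)
    rw [Real.sin_two_mul] at h1
    have hc := Real.cos_arctan_pos u
    have h2 : Real.sin (Real.arctan u) = u * Real.cos (Real.arctan u) := by
      have := Real.tan_arctan u
      rw [Real.tan_eq_sin_div_cos, div_eq_iff hc.ne'] at this
      exact this
    have h3 := Real.cos_sq_arctan u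
    have h4 : u * (1 / (1 + u ^ 2)) ≤ Real.arctan u := by
      rw [← h3]; rw [h2] at h1; nlinarith
    have h5 : u * (1 / (1 + u ^ 2)) = -t / (1 + t ^ 2) := by
      rw [mul_one_div, div_eq_div_iff (by positivity) (by positivity)]
      linear_combination (t + u) * htu
    rw [h5, div_le_iff₀ (by positivity)] at h4
    linarith
  · have h1 : Real.arctan u ≤ u := by
      have h1 := Real.lt_tan hθ (Real.arctan_lt_pi_div_two u)
      rw [Real.tan_arctan] at h1
      exact h1.le
    nlinarith

lemma a_pos (t : ℝ) : 0 < Real.pi / 2 + Real.arctan t := by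
  have := Real.neg_pi_div_two_lt_arctan t
  linarith

lemma mu_facts (μ : ℝ → ℝ)
    (hμ : ∀ t, μ t = (2 / Real.pi) * Real.exp t * (Real.pi / 2 + Real.arctan t)) :
    (∀ t, deriv μ t / μ t = 1 + ((1 + t ^ 2) * (Real.pi / 2 + Real.arctan t))⁻¹) ∧
    (∀ t, HasDerivAt (fun t => Real.log (μ t)) (deriv μ t / μ t) t) ∧
    Tendsto (fun t => Real.log (μ t)) atBot atBot ∧ Tendsto (fun t => Real.log (μ t)) atTop atTop := by
  have hpos : ∀ t, 0 < μ t := by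
    intro t; rw [hμ]; have := a_pos t; positivity
  have hd : ∀ t, HasDerivAt μ ((2 / Real.pi) * Real.exp t * (Real.pi / 2 + Real.arctan t) +
      (2 / Real.pi) * Real.exp t * (1 / (1 + t ^ 2))) t := by
    intro t
    rw [show μ = _ from funext hμ]
    exact ((Real.hasDerivAt_exp t).const_mul _).mul ((Real.hasDerivAt_arctan t).const_add _)
  refine ⟨fun t => ?_, fun t => ?_, ?_, ?_⟩
  · rw [(hd t).deriv, hμ]
    have := a_pos t
    have := Real.exp_pos t
    have := Real.pi_pos
    have : 0 < 1 + t ^ 2 := by positivity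
    rw [div_eq_iff (by positivity)]
    generalize Real.pi / 2 + Real.arctan t = a at *
    field_simp
  · exact (hd t).differentiableAt.hasDerivAt.log (hpos t).ne'
  · refine tendsto_atBot_mono (fun t => ?_)
      (tendsto_atBot_add_const_right _ (Real.log 2) tendsto_id)
    have h1 : μ t ≤ Real.exp t * 2 := by
      rw [hμ]
      have := Real.arctan_lt_pi_div_two t
      have hp := Real.pi_pos
      calc _ ≤ 2 / Real.pi * Real.exp t * Real.pi := by gcongr; linarith
        _ = _ := by field_simp
    have := Real.log_le_log (hpos t) h1
    rwa [Real.log_mul (Real.exp_pos _).ne' two_ne_zero, Real.log_exp] at this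
  · refine tendsto_atTop_mono' _ ?_ tendsto_id
    filter_upwards [eventually_ge_atTop 0] with t ht
    have h1 : Real.exp t ≤ μ t := by
      rw [hμ]
      have := Real.arctan_nonneg.2 ht
      have hp := Real.pi_pos
      calc _ = 2 / Real.pi * Real.exp t * (Real.pi / 2) := by field_simp
        _ ≤ _ := by gcongr; linarith
    have := Real.log_le_log (Real.exp_pos t) h1
    rwa [Real.log_exp] at this

lemma p_facts (p : ℝ → ℝ)
    (hp : ∀ t, p t = 1 + ((1 + t ^ 2) * (Real.pi / 2 + Real.arctan t))⁻¹) :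
    (∀ t, 1 ≤ p t) ∧
    (∀ δ > 0, ∃ T, ∀ s t, s ≤ t → t ≤ T → |p t - p s| ≤ δ * (t - s)) ∧
    (∀ δ > 0, ∃ T, ∀ t ≤ T, |p t - 1| ≤ δ) := by
  have hb : ∀ t, 0 < (1 + t ^ 2) * (Real.pi / 2 + Real.arctan t) := by
    intro t; have := a_pos t; positivity
  refine ⟨fun t => ?_, fun δ hδ => ?_, fun δ hδ => ?_⟩
  · rw [hp]; have := inv_pos.2 (hb t); linarith
  · refine ⟨-(1 + 1 / δ), fun s t hst ht => ?_⟩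
    have hδ' : 0 < 1 / δ := by positivity
    have hd : ∀ x ∈ Iic (-(1 + 1 / δ)), HasDerivWithinAt p
      (-(2 * x * (Real.pi / 2 + Real.arctan x) + 1) /
        ((1 + x ^ 2) * (Real.pi / 2 + Real.arctan x)) ^ 2) (Iic (-(1 + 1 / δ))) x := by
      intro x _
      rw [show p = _ from funext hp]
      have h1 : HasDerivAt (fun x : ℝ => 1 + x ^ 2) (2 * x) x := by
        simpa using (hasDerivAt_pow 2 x).const_add 1
      have h2 := ((h1.mul ((Real.hasDerivAt_arctan x).const_add (Real.pi / 2))).inv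
        (hb x).ne').const_add 1
      refine (h2.congr_deriv ?_).hasDerivWithinAt
      have : 0 < 1 + x ^ 2 := by positivity
      congr 1
      field_simp
    have hbd : ∀ x ∈ Iic (-(1 + 1 / δ)), ‖-(2 * x * (Real.pi / 2 + Real.arctan x) + 1) /
        ((1 + x ^ 2) * (Real.pi / 2 + Real.arctan x)) ^ 2‖ ≤ δ := by
      intro x hx
      have hx : x ≤ -(1 + 1 / δ) := hx
      have hx0 : x < 0 := by linarith
      obtain ⟨h1, h2⟩ := a_bounds hx0
      have ha := a_pos x
      have hbx := hb x
      rw [Real.norm_eq_abs, abs_div, abs_of_pos (pow_pos hbx 2), div_le_iff₀ (pow_pos hbx 2)]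
      have e1 : |-(2 * x * (Real.pi / 2 + Real.arctan x) + 1)| ≤ 1 := by
        rw [abs_le]; constructor <;> nlinarith
      have e2 : 1 + 1 / δ ≤ (1 + x ^ 2) * (Real.pi / 2 + Real.arctan x) := by linarith
      have e3 : 1 / δ ≤ ((1 + x ^ 2) * (Real.pi / 2 + Real.arctan x)) ^ 2 := by nlinarith
      rw [div_le_iff₀ hδ] at e3
      linarith
    have := Convex.norm_image_sub_le_of_norm_hasDerivWithin_le hd hbd (convex_Iic _)
      (show s ∈ _ from hst.trans ht) (show t ∈ _ from ht)
    rwa [Real.norm_eq_abs, Real.norm_eq_abs, abs_of_nonneg (sub_nonneg.2 hst)] at this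
  · refine ⟨-(1 / δ), fun t ht => ?_⟩
    have hδ' : 0 < 1 / δ := by positivity
    obtain ⟨h1, -⟩ := a_bounds (show t < 0 by linarith)
    rw [hp, add_sub_cancel_left, abs_of_pos (inv_pos.2 (hb t)), inv_le_comm₀ (hb t) hδ]
    rw [← one_div]; linarith


lemma hasDerivAt_vec {x : ℝ → EuclideanSpace ℝ (Fin 2)} {v : EuclideanSpace ℝ (Fin 2)} {t : ℝ} :
    HasDerivAt x v t ↔ HasDerivAt (fun r => x r 0) (v 0) t ∧ HasDerivAt (fun r => x r 1) (v 1) t := by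
  rw [hasDerivAt_iff_hasFDerivAt, ← hasFDerivWithinAt_univ, hasFDerivWithinAt_euclidean, Fin.forall_fin_two,
    hasDerivAt_iff_hasFDerivAt, hasDerivAt_iff_hasFDerivAt, hasFDerivWithinAt_univ,
    hasFDerivWithinAt_univ]
  have : ∀ i, (PiLp.proj 2 (fun _ : Fin 2 => ℝ) i : EuclideanSpace ℝ (Fin 2) →L[ℝ] ℝ) ∘L
      (ContinuousLinearMap.toSpanSingleton ℝ v) =
      ContinuousLinearMap.toSpanSingleton ℝ (v i) := by
    intro i
    ext
    simp
  rw [this, this]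

lemma vec_ext {z w : EuclideanSpace ℝ (Fin 2)} (h0 : z 0 = w 0) (h1 : z 1 = w 1) : z = w := by
  ext i
  fin_cases i
  · exact h0
  · exact h1

lemma vec_norm_le {z : EuclideanSpace ℝ (Fin 2)} {C : ℝ} (hC : 0 ≤ C)
    (h : z 0 ^ 2 + z 1 ^ 2 ≤ C ^ 2) : ‖z‖ ≤ C := by
  refine abs_le_of_sq_le_sq' ?_ hC |>.2
  rw [EuclideanSpace.norm_sq_eq, Fin.sum_univ_two]
  simpa using h

lemma vec_norm_le_add {z : EuclideanSpace ℝ (Fin 2)} {C D : ℝ}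
    (h0 : |z 0| ≤ C) (h1 : |z 1| ≤ D) : ‖z‖ ≤ C + D := by
  have hC := (abs_nonneg _).trans h0
  have hD := (abs_nonneg _).trans h1
  refine vec_norm_le (by positivity) ?_
  have e0 := sq_le_sq' (by linarith [(abs_le.1 h0).1]) (abs_le.1 h0).2
  have e1 := sq_le_sq' (by linarith [(abs_le.1 h1).1]) (abs_le.1 h1).2
  nlinarith

theorem example_system_topologically_conjugate
    (η₁ η₂ ε : ℝ) (hη₁ : 0 < η₁) (hη₂ : 0 < η₂) (hε : 0 < ε)
    (μ : ℝ → ℝ)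
    (hμ : ∀ t, μ t = (2 / Real.pi) * Real.exp t * (Real.pi / 2 + Real.arctan t))
    (f : ℝ → EuclideanSpace ℝ (Fin 2) → EuclideanSpace ℝ (Fin 2))
    (hf : ∀ t (z : EuclideanSpace ℝ (Fin 2)),
      f t z 0 = ε * Real.sin (z 0 + t) ∧ f t z 1 = ε * Real.cos (z 0 + t))
    (A : ℝ → EuclideanSpace ℝ (Fin 2) →L[ℝ] EuclideanSpace ℝ (Fin 2))
    (hA : ∀ t (z : EuclideanSpace ℝ (Fin 2)),
      A t z 0 = -η₁ * (deriv μ t / μ t) * z 0 ∧ A t z 1 = η₂ * (deriv μ t / μ t) * z 1) :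
    (∀ t z, ‖f t z‖ ≤ 2 * ε * (deriv μ t / μ t)) ∧
    (∀ t z₁ z₂, ‖f t z₁ - f t z₂‖ ≤ 2 * ε * (deriv μ t / μ t) * ‖z₁ - z₂‖) ∧
    (ε < max η₁ η₂ / 8 →
      ∃ H G : ℝ → EuclideanSpace ℝ (Fin 2) → EuclideanSpace ℝ (Fin 2),
        (∀ t, Continuous (H t)) ∧
        (∀ t, Continuous (G t)) ∧
        (∀ t z, G t (H t z) = z) ∧
        (∀ t z, H t (G t z) = z) ∧
        (∃ C, ∀ t z, ‖H t z - z‖ ≤ C) ∧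
        (∃ C, ∀ t z, ‖G t z - z‖ ≤ C) ∧
        (∀ x : ℝ → EuclideanSpace ℝ (Fin 2),
          (∀ t, HasDerivAt x (A t (x t) + f t (x t)) t) →
          ∀ t, HasDerivAt (fun r => H r (x r)) (A t (H t (x t))) t) ∧
        (∀ y : ℝ → EuclideanSpace ℝ (Fin 2),
          (∀ t, HasDerivAt y (A t (y t)) t) →
          ∀ t, HasDerivAt (fun r => G r (y r)) (A t (G t (y t)) + f t (G t (y t))) t)) := by
  obtain ⟨hpf, hℓ, hℓb, hℓt⟩ := mu_facts μ hμ
  obtain ⟨hp1, hpl, hp0⟩ := p_facts (fun t => deriv μ t / μ t) hpf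
  set p : ℝ → ℝ := fun t => deriv μ t / μ t with hp
  have hpe : ∀ t, deriv μ t / μ t = p t := fun _ => rfl
  simp only [hpe] at hA hℓ hp1 hpl hp0 ⊢
  generalize (fun t => Real.log (μ t)) = ℓ at hℓ hℓb hℓt
  clear_value p
  refine ⟨fun t z => ?_, fun t z₁ z₂ => ?_, fun _ => ?_⟩
  · have := hp1 t
    refine vec_norm_le (by positivity) ?_
    rw [(hf t z).1, (hf t z).2]
    have e := Real.sin_sq_add_cos_sq (z 0 + t)
    have : ε ≤ 2 * ε * p t := by nlinarith
    calc _ = ε ^ 2 := by linear_combination ε ^ 2 * e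
      _ ≤ _ := by gcongr
  · have := hp1 t
    have e1 : ‖f t z₁ - f t z₂‖ ≤ ε * |z₁ 0 - z₂ 0| := by
      refine vec_norm_le (by positivity) ?_
      rw [PiLp.sub_apply, PiLp.sub_apply, (hf t z₁).1, (hf t z₁).2, (hf t z₂).1, (hf t z₂).2,
        mul_pow, sq_abs]
      have c1 := Real.one_sub_sq_div_two_le_cos (x := (z₁ 0 + t) - (z₂ 0 + t))
      rw [Real.cos_sub] at c1
      have s1 := Real.sin_sq_add_cos_sq (z₁ 0 + t)
      have s2 := Real.sin_sq_add_cos_sq (z₂ 0 + t)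
      calc _ = ε ^ 2 * (2 - 2 * (Real.cos (z₁ 0 + t) * Real.cos (z₂ 0 + t) +
            Real.sin (z₁ 0 + t) * Real.sin (z₂ 0 + t))) := by
            linear_combination ε ^ 2 * s1 + ε ^ 2 * s2
        _ ≤ _ := by gcongr; linarith
    have e2 : |z₁ 0 - z₂ 0| ≤ ‖z₁ - z₂‖ := by
      simpa using PiLp.norm_apply_le (z₁ - z₂) 0
    calc _ ≤ _ := e1
      _ ≤ (2 * ε * p t) * ‖z₁ - z₂‖ := by gcongr; nlinarith
  obtain ⟨φ, h, g, hφ0, hφ, hφu, hφc, hhc, hgc, hgh, hhg, hhd, hhx, hgx⟩ :=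
    x_conj η₁ ε hη₁ hε p ℓ hℓ hℓb hp1 hpl hp0
  have hφc' : ∀ t x, Continuous (φ t x) := fun t x =>
    continuous_iff_continuousAt.2 fun s => (hφ t x s).continuousAt
  have hKc : ∀ t, Continuous fun x => Kop η₂ ε ℓ (φ t x) t := fun t =>
    K_cont hη₂ hε hℓ hℓt hp1 (φ t) (hφc' t) (hφc t) t
  have hKb : ∀ u t, |Kop η₂ ε ℓ u t| ≤ ε / η₂ := K_bound hη₂ hε hℓ hℓt hp1
  have hproj : ∀ i : Fin 2, Continuous fun z : EuclideanSpace ℝ (Fin 2) => z i := fun i => by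
    fun_prop
  have hexp : ∀ c t, HasDerivAt (fun r => c * Real.exp (-(η₁ * ℓ r)))
      (-η₁ * p t * (c * Real.exp (-(η₁ * ℓ t)))) t := by
    intro c t
    have := ((((hℓ t).const_mul η₁).neg).exp).const_mul c
    refine this.congr_deriv ?_
    simp only [Pi.neg_apply]
    ring
  refine ⟨fun t z => !₂[h t (z 0), z 1 + Kop η₂ ε ℓ (φ t (z 0)) t],
    fun t z => !₂[g t (z 0), z 1 - Kop η₂ ε ℓ (φ t (g t (z 0))) t], fun t => ?_, fun t => ?_,
    fun t z => ?_, fun t z => ?_, ⟨ε / η₁ + ε / η₂, fun t z => ?_⟩,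
    ⟨ε / η₁ + ε / η₂, fun t z => ?_⟩, fun x hx t => ?_, fun y hy t => ?_⟩
  · refine (PiLp.continuous_toLp 2 _).comp (continuous_pi fun i => ?_)
    fin_cases i
    · exact (hhc t).comp (hproj 0)
    · exact (hproj 1).add ((hKc t).comp (hproj 0))
  · refine (PiLp.continuous_toLp 2 _).comp (continuous_pi fun i => ?_)
    fin_cases i
    · exact (hgc t).comp (hproj 0)
    · exact (hproj 1).sub ((hKc t).comp ((hgc t).comp (hproj 0)))
  · apply vec_ext <;> simp [hgh]
  · apply vec_ext <;> simp [hhg]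
  · refine vec_norm_le_add ?_ ?_
    · simpa using hhd t (z 0)
    · simpa using hKb _ t
  · refine vec_norm_le_add ?_ ?_
    · have := hhd t (g t (z 0))
      rw [hhg, abs_sub_comm] at this
      simpa using this
    · simpa using hKb _ t
  · have hx0 : ∀ t, HasDerivAt (fun r => x r 0)
        (-η₁ * p t * x t 0 + ε * Real.sin (x t 0 + t)) t := by
      intro t
      have := (hasDerivAt_vec.1 (hx t)).1
      rwa [PiLp.add_apply, (hA _ _).1, (hf _ _).1] at this
    have hx1 : HasDerivAt (fun r => x r 1)
        (η₂ * p t * x t 1 + ε * Real.cos (x t 0 + t)) t := by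
      have := (hasDerivAt_vec.1 (hx t)).2
      rwa [PiLp.add_apply, (hA _ _).2, (hf _ _).2] at this
    have hu : ∀ r, φ r (x r 0) = fun r => x r 0 := hφu _ hx0
    obtain ⟨c, hc⟩ := hhx _ hx0
    have hK := K_deriv hη₂ hε hℓ hℓt hp1 (fun r => x r 0)
      (continuous_iff_continuousAt.2 fun s => (hx0 s).continuousAt) t
    rw [hasDerivAt_vec, (hA _ _).1, (hA _ _).2]
    simp only [hu, Matrix.cons_val_zero, Matrix.cons_val_one]
    simp only [hc]
    refine ⟨hexp c t, (hx1.add hK).congr_deriv ?_⟩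
    ring
  · have hy0 : ∀ t, HasDerivAt (fun r => y r 0) (-η₁ * p t * y t 0) t := by
      intro t
      have := (hasDerivAt_vec.1 (hy t)).1
      rwa [(hA _ _).1] at this
    have hy1 : HasDerivAt (fun r => y r 1) (η₂ * p t * y t 1) t := by
      have := (hasDerivAt_vec.1 (hy t)).2
      rwa [(hA _ _).2] at this
    obtain ⟨c, hc⟩ : ∃ c, ∀ t, y t 0 = c * Real.exp (-(η₁ * ℓ t)) := by
      have hd : ∀ t, HasDerivAt (fun r => Real.exp (η₁ * ℓ r) * y r 0) 0 t := by
        intro t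
        refine (((hℓ t).const_mul η₁).exp.mul (hy0 t)).congr_deriv ?_
        ring
      refine ⟨Real.exp (η₁ * ℓ 0) * y 0 0, fun t => ?_⟩
      have := is_const_of_deriv_eq_zero (fun t => (hd t).differentiableAt)
        (fun t => (hd t).deriv) 0 t
      simp only at this
      rw [this, mul_right_comm, ← Real.exp_add, add_neg_cancel, Real.exp_zero, one_mul]
    obtain ⟨x, hx0, hxg⟩ := hgx c
    have hu : ∀ r, φ r (x r) = x := hφu _ hx0
    have hK := K_deriv hη₂ hε hℓ hℓt hp1 x
      (continuous_iff_continuousAt.2 fun s => (hx0 s).continuousAt) t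
    rw [hasDerivAt_vec, PiLp.add_apply, PiLp.add_apply, (hA _ _).1, (hA _ _).2,
      (hf _ _).1, (hf _ _).2]
    simp only [hc, hxg, hu, Matrix.cons_val_zero, Matrix.cons_val_one]
    refine ⟨hx0 t, (hy1.sub hK).congr_deriv ?_⟩
    ring
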